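/- arXiv:2202.09627 — 7 statements merged into one kernel-verified Lean document; each statement's English description precedes it below -/
import Mathlib

section
/- Let n be a positive natural number, Ω a preconnected subset of ((Fin n → ℝ) × Matrix (Fin n) (Fin n) ℝ), and λ : ((Fin n → ℝ) × Matrix (Fin n) (Fin n) ℝ) → ℂ continuous on Ω with det(diagonal(fun j => (λ(α,A))^(α j : ℂ)) − A.map Complex.ofReal) = 0 for every (α, A) ∈ Ω. Assume that for every (α, A) ∈ Ω and every y : ℝ, det(diagonal(fun j => ((y : ℂ) * Complex.I)^(α j : ℂ)) − A.map Complex.ofReal) ≠ 0. If there exists one point (α₀, A₀) ∈ Ω with (λ(α₀,A₀)).re < 0, then (λ(α,A)).re < 0 for every (α, A) ∈ Ω. -/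
open Complex

variable {X : Type*} [TopologicalSpace X] {Ω : Set X}

theorem forall_lt_of_isPreconnected_of_ne {α : Type*} [TopologicalSpace α] [LinearOrder α]
    [OrderClosedTopology α] {f g : X → α} (hΩ : IsPreconnected Ω) (hf : ContinuousOn f Ω)
    (hg : ContinuousOn g Ω) (hne : ∀ x ∈ Ω, f x ≠ g x) {x₀ : X} (hx₀ : x₀ ∈ Ω)
    (hlt : f x₀ < g x₀) : ∀ x ∈ Ω, f x < g x := by
  intro x hx
  by_contra! hle
  obtain ⟨z, hz, hfg⟩ := hΩ.intermediate_value₂ hx₀ hx hf hg hlt.le hle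
  exact hne z hz hfg

theorem re_ne_zero_of_apply_eq_zero {R : Type*} [Zero R] {Δ : ℂ → R}
    (hΔ : ∀ y : ℝ, Δ (y * I) ≠ 0) {s : ℂ} (hs : Δ s = 0) : s.re ≠ 0 := by
  intro hre
  have hs_eq : (s.im * I : ℂ) = s := by
    simpa only [hre, ofReal_zero, zero_add] using re_add_im s
  exact hΔ s.im (hs_eq.symm ▸ hs)

theorem re_root_neg_of_one_point_general {R : Type*} [Zero R] {Δ : X → ℂ → R} {lam : X → ℂ}
    (hΩ : IsPreconnected Ω) (hcont : ContinuousOn lam Ω) (hroot : ∀ p ∈ Ω, Δ p (lam p) = 0)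
    (hcrit : ∀ p ∈ Ω, ∀ y : ℝ, Δ p (y * I) ≠ 0) {p₀ : X} (hp₀ : p₀ ∈ Ω)
    (hneg : (lam p₀).re < 0) : ∀ p ∈ Ω, (lam p).re < 0 :=
  forall_lt_of_isPreconnected_of_ne hΩ (continuous_re.comp_continuousOn hcont) continuousOn_const
    (fun p hp ↦ re_ne_zero_of_apply_eq_zero (hcrit p hp) (hroot p hp)) hp₀ hneg

/-- The characteristic function `Δ_{(α, A)}` of the fractional-order linear system `D^α x = A x`,
whose zeros decide its stability. Each power `s ^ α j` is the principal branch. -/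
noncomputable def fracCharFun {ι : Type*} [Fintype ι] [DecidableEq ι] (α : ι → ℝ)
    (A : Matrix ι ι ℝ) (s : ℂ) : ℂ :=
  (Matrix.diagonal (fun j ↦ s ^ (α j : ℂ)) - A.map ofReal).det

/-- Consequence of Theorem 2 of the paper: if one point of a preconnected region avoiding
the critical hyper-surface has a selected root with negative real part, then every point
of the region does. -/
theorem re_root_neg_of_one_point
    (n : ℕ) (hn : 0 < n)
    (Ω : Set ((Fin n → ℝ) × Matrix (Fin n) (Fin n) ℝ))
    (hΩ : IsPreconnected Ω)
    (lam : ((Fin n → ℝ) × Matrix (Fin n) (Fin n) ℝ) → ℂ)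
    (hcont : ContinuousOn lam Ω)
    (hroot : ∀ p ∈ Ω,
      (Matrix.diagonal (fun j : Fin n => (lam p) ^ ((p.1 j : ℂ)))
        - p.2.map Complex.ofReal).det = 0)
    (hcrit : ∀ p ∈ Ω, ∀ y : ℝ,
      (Matrix.diagonal (fun j : Fin n => ((y : ℂ) * Complex.I) ^ ((p.1 j : ℂ)))
        - p.2.map Complex.ofReal).det ≠ 0)
    (p₀ : (Fin n → ℝ) × Matrix (Fin n) (Fin n) ℝ) (hp₀ : p₀ ∈ Ω)
    (hneg : (lam p₀).re < 0) :
    ∀ p ∈ Ω, (lam p).re < 0 :=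
  re_root_neg_of_one_point_general
    (Δ := fun p : (Fin n → ℝ) × Matrix (Fin n) (Fin n) ℝ ↦ fracCharFun p.1 p.2)
    hΩ hcont hroot hcrit hp₀ hneg
end

section
/- Let γ, α, c, d, r be real numbers with r > 0, c ≠ 0, and sin((γ − α)·π/2) ≠ 0. If ((r : ℂ) * Complex.I)^(γ : ℂ) + c * ((r : ℂ) * Complex.I)^(α : ℂ) + d = 0, then r^γ = d * Real.sin (α * π / 2) / Real.sin ((γ − α) * π / 2) and r^α = −d * Real.sin (γ * π / 2) / (c * Real.sin ((γ − α) * π / 2)). -/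
open Real

lemma arg_ofReal_mul_I {r : ℝ} (hr : 0 < r) : ((r : ℂ) * Complex.I).arg = π / 2 := by
  rw [Complex.arg_real_mul _ hr, Complex.arg_I]

lemma norm_ofReal_mul_I {r : ℝ} (hr : 0 ≤ r) : ‖(r : ℂ) * Complex.I‖ = r := by
  rw [norm_mul, Complex.norm_I, mul_one, Complex.norm_of_nonneg hr]

-- Multiplying `x * e^{iφ} + y * e^{iψ} + d = 0` by `e^{-iψ}` makes the term in `y` real, so taking
-- imaginary parts eliminates `y`.
lemma mul_sin_sub_eq_mul_sin {x y d φ ψ : ℝ} (hcos : x * cos φ + y * cos ψ + d = 0)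
    (hsin : x * sin φ + y * sin ψ = 0) : x * sin (φ - ψ) = d * sin ψ := by
  rw [sin_sub]
  linear_combination cos ψ * hsin - sin ψ * hcos

theorem two_term_cramer_general (γ α c d : ℝ) (s : ℂ) (hc : c ≠ 0)
    (hsin : sin ((γ - α) * s.arg) ≠ 0)
    (hroot : s ^ (γ : ℂ) + (c : ℂ) * s ^ (α : ℂ) + (d : ℂ) = 0) :
    ‖s‖ ^ γ = d * sin (α * s.arg) / sin ((γ - α) * s.arg) ∧
    ‖s‖ ^ α = -d * sin (γ * s.arg) / (c * sin ((γ - α) * s.arg)) := by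
  have hre : ‖s‖ ^ γ * cos (γ * s.arg) + c * ‖s‖ ^ α * cos (α * s.arg) + d = 0 := by
    simpa [Complex.cpow_ofReal_re, mul_comm s.arg, mul_assoc] using congrArg Complex.re hroot
  have him : ‖s‖ ^ γ * sin (γ * s.arg) + c * ‖s‖ ^ α * sin (α * s.arg) = 0 := by
    simpa [Complex.cpow_ofReal_im, mul_comm s.arg, mul_assoc] using congrArg Complex.im hroot
  have hγ : ‖s‖ ^ γ * sin ((γ - α) * s.arg) = d * sin (α * s.arg) := by
    rw [sub_mul]
    exact mul_sin_sub_eq_mul_sin hre him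
  have hα : c * ‖s‖ ^ α * sin ((α - γ) * s.arg) = d * sin (γ * s.arg) := by
    rw [add_comm (‖s‖ ^ γ * _)] at hre him
    rw [sub_mul]
    exact mul_sin_sub_eq_mul_sin hre him
  refine ⟨eq_div_of_mul_eq hsin hγ, eq_div_of_mul_eq (mul_ne_zero hc hsin) ?_⟩
  rw [← neg_sub γ α, neg_mul, sin_neg] at hα
  linear_combination -hα

/-- Eq. (26) of the paper (general form): if s = r·i is a root of s^γ + c·s^α + d = 0,
Cramer's rule determines r^γ and r^α. -/
theorem two_term_cramer (γ α c d r : ℝ) (hr : 0 < r) (hc : c ≠ 0)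
    (hsin : Real.sin ((γ - α) * π / 2) ≠ 0)
    (hroot : ((r : ℂ) * Complex.I) ^ (γ : ℂ) + (c : ℂ) * ((r : ℂ) * Complex.I) ^ (α : ℂ)
      + (d : ℂ) = 0) :
    r ^ γ = d * Real.sin (α * π / 2) / Real.sin ((γ - α) * π / 2) ∧
    r ^ α = -d * Real.sin (γ * π / 2) / (c * Real.sin ((γ - α) * π / 2)) := by
  simpa only [arg_ofReal_mul_I hr, norm_ofReal_mul_I hr.le, mul_div_assoc] using
    two_term_cramer_general γ α c d (r * Complex.I) hc
      (by rwa [arg_ofReal_mul_I hr, ← mul_div_assoc]) hroot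
end

section
/- Let α, β, a, b, r be real numbers with r > 0, a ≠ 0, and sin((β − α)·π/2) ≠ 0. If ((r : ℂ) * Complex.I)^(α : ℂ) − a * ((r : ℂ) * Complex.I)^(β : ℂ) + b = 0, then r^α = −b * Real.sin (β * π / 2) / Real.sin ((β − α) * π / 2) and r^β = −b * Real.sin (α * π / 2) / (a * Real.sin ((β − α) * π / 2)). -/
open Real

/-!
Multiplying `c * s ^ α + d * s ^ β + b = 0` by the phase `exp (-i β arg s)` makes its second term
real, so the imaginary part of the product no longer involves `d`. This is the law of sines for
the triangle whose sides are the three terms; exchanging the two powers gives the other relation.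
-/

lemma mul_norm_rpow_mul_sin_sub_mul_arg {s : ℂ} {α β c d b : ℝ}
    (h : (c : ℂ) * s ^ (α : ℂ) + (d : ℂ) * s ^ (β : ℂ) + (b : ℂ) = 0) :
    c * ‖s‖ ^ α * sin ((α - β) * s.arg) = b * sin (β * s.arg) := by
  have real_part : c * (‖s‖ ^ α * cos (α * s.arg)) + d * (‖s‖ ^ β * cos (β * s.arg)) + b = 0 := by
    simpa [Complex.cpow_ofReal_re, mul_comm s.arg] using congrArg Complex.re h
  have imag_part : c * (‖s‖ ^ α * sin (α * s.arg)) + d * (‖s‖ ^ β * sin (β * s.arg)) = 0 := by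
    simpa [Complex.cpow_ofReal_im, mul_comm s.arg] using congrArg Complex.im h
  rw [sub_mul, sin_sub]
  linear_combination cos (β * s.arg) * imag_part - sin (β * s.arg) * real_part

theorem example1_cramer_general {s : ℂ} {α β a b : ℝ} (ha : a ≠ 0)
    (hsin : sin ((β - α) * s.arg) ≠ 0)
    (hroot : s ^ (α : ℂ) - (a : ℂ) * s ^ (β : ℂ) + (b : ℂ) = 0) :
    ‖s‖ ^ α = -b * sin (β * s.arg) / sin ((β - α) * s.arg) ∧
    ‖s‖ ^ β = -b * sin (α * s.arg) / (a * sin ((β - α) * s.arg)) := by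
  have sine_law_α : 1 * ‖s‖ ^ α * sin ((α - β) * s.arg) = b * sin (β * s.arg) :=
    mul_norm_rpow_mul_sin_sub_mul_arg (d := -a) (by push_cast; linear_combination hroot)
  have sine_law_β : -a * ‖s‖ ^ β * sin ((β - α) * s.arg) = b * sin (α * s.arg) :=
    mul_norm_rpow_mul_sin_sub_mul_arg (d := 1) (by push_cast; linear_combination hroot)
  rw [← neg_sub β α, neg_mul, sin_neg] at sine_law_α
  rw [eq_div_iff hsin, eq_div_iff (mul_ne_zero ha hsin)]
  constructor
  · linear_combination -sine_law_α
  · linear_combination -sine_law_β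

/-- Eq. (26) in Example 1 of the paper (sign of r^α corrected): if s = r·i is a root of
s^α − a·s^β + b = 0, then r^α and r^β are determined. -/
theorem example1_cramer (α β a b r : ℝ) (hr : 0 < r) (ha : a ≠ 0)
    (hsin : Real.sin ((β - α) * π / 2) ≠ 0)
    (hroot : ((r : ℂ) * Complex.I) ^ (α : ℂ) - (a : ℂ) * ((r : ℂ) * Complex.I) ^ (β : ℂ)
      + (b : ℂ) = 0) :
    r ^ α = -b * Real.sin (β * π / 2) / Real.sin ((β - α) * π / 2) ∧
    r ^ β = -b * Real.sin (α * π / 2) / (a * Real.sin ((β - α) * π / 2)) := by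
  simp only [mul_div_assoc _ π, ← arg_ofReal_mul_I hr] at hsin ⊢
  simpa only [norm_ofReal_mul_I hr.le] using example1_cramer_general ha hsin hroot
end

section
/- Let α, β, a, b, r be real numbers with r > 0, a ≠ 0, and sin((β − α)·π/2) ≠ 0. Suppose ((r : ℂ) * Complex.I)^(α : ℂ) − a * ((r : ℂ) * Complex.I)^(β : ℂ) + b = 0. Set u := −b * Real.sin (β * π / 2) / Real.sin ((β − α) * π / 2) and v := −b * Real.sin (α * π / 2) / (a * Real.sin ((β − α) * π / 2)). Then u > 0, v > 0, and u^β = v^α (real powers). -/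
open Real

/-!
If `c * z ^ α + d * z ^ β + b = 0` with real coefficients, the three terms are the signed sides of a
closed triangle in the plane whose directions are the angles `α * arg z`, `β * arg z` and `0`. The
law of sines in this triangle expresses `‖z‖ ^ α` and `‖z‖ ^ β` through `b`, and `‖z‖` is eliminated
by `(‖z‖ ^ α) ^ β = (‖z‖ ^ β) ^ α`.
-/

lemma norm_rpow_mul_sin_of_trinomial_eq_zero {α β b c d : ℝ} {z : ℂ}
    (h : (c : ℂ) * z ^ (α : ℂ) + (d : ℂ) * z ^ (β : ℂ) + (b : ℂ) = 0) :
    c * ‖z‖ ^ α * sin ((β - α) * z.arg) = -b * sin (β * z.arg) := by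
  have hre : c * (‖z‖ ^ α * cos (α * z.arg)) + d * (‖z‖ ^ β * cos (β * z.arg)) + b = 0 := by
    simpa [Complex.cpow_ofReal_re, mul_comm z.arg] using congrArg Complex.re h
  have him : c * (‖z‖ ^ α * sin (α * z.arg)) + d * (‖z‖ ^ β * sin (β * z.arg)) = 0 := by
    simpa [Complex.cpow_ofReal_im, mul_comm z.arg] using congrArg Complex.im h
  rw [sub_mul, sin_sub]
  -- Up to sign, the imaginary part of `h` rotated by `-β * arg z`, which makes the `d`-term real.
  linear_combination sin (β * z.arg) * hre - cos (β * z.arg) * him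

section Root

variable {α β a b : ℝ} {z : ℂ}

lemma norm_rpow_eq_div_sin_of_root (hsin : sin ((β - α) * z.arg) ≠ 0)
    (hroot : z ^ (α : ℂ) - (a : ℂ) * z ^ (β : ℂ) + (b : ℂ) = 0) :
    ‖z‖ ^ α = -b * sin (β * z.arg) / sin ((β - α) * z.arg) := by
  have h : ((1 : ℝ) : ℂ) * z ^ (α : ℂ) + ((-a : ℝ) : ℂ) * z ^ (β : ℂ) + (b : ℂ) = 0 := by
    push_cast
    linear_combination hroot
  rw [eq_div_iff hsin, ← norm_rpow_mul_sin_of_trinomial_eq_zero h, one_mul]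

lemma norm_rpow_eq_div_mul_sin_of_root (ha : a ≠ 0) (hsin : sin ((β - α) * z.arg) ≠ 0)
    (hroot : z ^ (α : ℂ) - (a : ℂ) * z ^ (β : ℂ) + (b : ℂ) = 0) :
    ‖z‖ ^ β = -b * sin (α * z.arg) / (a * sin ((β - α) * z.arg)) := by
  have h : ((-a : ℝ) : ℂ) * z ^ (β : ℂ) + ((1 : ℝ) : ℂ) * z ^ (α : ℂ) + (b : ℂ) = 0 := by
    push_cast
    linear_combination hroot
  rw [eq_div_iff (mul_ne_zero ha hsin), ← norm_rpow_mul_sin_of_trinomial_eq_zero h,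
    ← neg_sub β α, neg_mul (β - α), sin_neg]
  ring

theorem example1_boundary_necessity_general (ha : a ≠ 0) (hsin : sin ((β - α) * z.arg) ≠ 0)
    (hroot : z ^ (α : ℂ) - (a : ℂ) * z ^ (β : ℂ) + (b : ℂ) = 0) :
    0 < -b * sin (β * z.arg) / sin ((β - α) * z.arg) ∧
    0 < -b * sin (α * z.arg) / (a * sin ((β - α) * z.arg)) ∧
    (-b * sin (β * z.arg) / sin ((β - α) * z.arg)) ^ β
      = (-b * sin (α * z.arg) / (a * sin ((β - α) * z.arg))) ^ α := by
  have hz : z ≠ 0 := by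
    rintro rfl
    simp at hsin
  have hnorm : 0 < ‖z‖ := norm_pos_iff.mpr hz
  rw [← norm_rpow_eq_div_sin_of_root hsin hroot, ← norm_rpow_eq_div_mul_sin_of_root ha hsin hroot]
  refine ⟨rpow_pos_of_pos hnorm α, rpow_pos_of_pos hnorm β, ?_⟩
  rw [← rpow_mul hnorm.le, ← rpow_mul hnorm.le, mul_comm]

end Root

/-- Eqs. (27)–(28) in Example 1 of the paper (signs corrected): eliminating r via
(r^α)^β = (r^β)^α yields the boundary equation of the stable parameter region. -/
theorem example1_boundary_necessity (α β a b r : ℝ) (hr : 0 < r) (ha : a ≠ 0)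
    (hsin : Real.sin ((β - α) * π / 2) ≠ 0)
    (hroot : ((r : ℂ) * Complex.I) ^ (α : ℂ) - (a : ℂ) * ((r : ℂ) * Complex.I) ^ (β : ℂ)
      + (b : ℂ) = 0) :
    0 < -b * Real.sin (β * π / 2) / Real.sin ((β - α) * π / 2) ∧
    0 < -b * Real.sin (α * π / 2) / (a * Real.sin ((β - α) * π / 2)) ∧
    (-b * Real.sin (β * π / 2) / Real.sin ((β - α) * π / 2)) ^ β
      = (-b * Real.sin (α * π / 2) / (a * Real.sin ((β - α) * π / 2))) ^ α := by
  simp only [mul_div_assoc _ π, ← arg_ofReal_mul_I hr] at hsin ⊢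
  exact example1_boundary_necessity_general ha hsin hroot
end

section
/- Let α, β, a, b be real numbers with α ≠ 0, a ≠ 0, and sin((β − α)·π/2) ≠ 0. Set u := −b * Real.sin (β * π / 2) / Real.sin ((β − α) * π / 2) and v := −b * Real.sin (α * π / 2) / (a * Real.sin ((β − α) * π / 2)). If u > 0, v > 0, and u^β = v^α (real powers), then there exists a real r > 0 such that ((r : ℂ) * Complex.I)^(α : ℂ) − a * ((r : ℂ) * Complex.I)^(β : ℂ) + b = 0. -/
open Real

/-!
On the positive imaginary axis `(r * I) ^ x = r ^ x * exp (x * π / 2 * I)`, so the characteristic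
equation at `r * I` is linear in `(r ^ α, r ^ β)`. Cramer's rule gives the only candidates `u`, `v`
for these two real powers, and for `u, v > 0`, `α ≠ 0` the equation `u ^ β = v ^ α` says
exactly that `u = r ^ α` and `v = r ^ β` for a common `r > 0`.
-/

theorem ofReal_mul_cpow {r : ℝ} (hr : 0 ≤ r) (w z : ℂ) :
    ((r : ℂ) * w) ^ z = (r : ℂ) ^ z * w ^ z := by
  rcases eq_or_ne z 0 with rfl | hz
  · simp only [Complex.cpow_zero, mul_one]
  rcases hr.eq_or_lt with rfl | hr
  · simp only [Complex.ofReal_zero, zero_mul, Complex.zero_cpow hz]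
  rcases eq_or_ne w 0 with rfl | hw
  · simp only [mul_zero, Complex.zero_cpow hz]
  have hr' : (r : ℂ) ≠ 0 := Complex.ofReal_ne_zero.mpr hr.ne'
  rw [Complex.cpow_def_of_ne_zero (mul_ne_zero hr' hw), Complex.log_ofReal_mul hr hw,
    Complex.ofReal_log hr.le, add_mul, Complex.exp_add, ← Complex.cpow_def_of_ne_zero hr',
    ← Complex.cpow_def_of_ne_zero hw]

theorem I_cpow (z : ℂ) : Complex.I ^ z = Complex.exp (z * π / 2 * Complex.I) := by
  rw [Complex.cpow_def_of_ne_zero Complex.I_ne_zero, Complex.log_I]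
  ring_nf

theorem ofReal_mul_I_cpow_ofReal {r : ℝ} (hr : 0 ≤ r) (x : ℝ) :
    ((r : ℂ) * Complex.I) ^ (x : ℂ) = ((r ^ x : ℝ) : ℂ) * Complex.exp (x * π / 2 * Complex.I) := by
  rw [ofReal_mul_cpow hr, I_cpow, Complex.ofReal_cpow hr]

theorem exists_pos_rpow_eq_and_rpow_eq {α β u v : ℝ} (hα : α ≠ 0) (hu : 0 < u) (hv : 0 ≤ v)
    (h : u ^ β = v ^ α) : ∃ r : ℝ, 0 < r ∧ r ^ α = u ∧ r ^ β = v := by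
  refine ⟨u ^ α⁻¹, rpow_pos_of_pos hu _, rpow_inv_rpow hu.le hα, ?_⟩
  calc (u ^ α⁻¹) ^ β = (u ^ β) ^ α⁻¹ := by
        rw [← rpow_mul hu.le, ← rpow_mul hu.le, mul_comm]
    _ = (v ^ α) ^ α⁻¹ := by rw [h]
    _ = v := rpow_rpow_inv hv hα

theorem sin_mul_exp_sub_sin_mul_exp (θ φ : ℂ) :
    Complex.sin φ * Complex.exp (θ * Complex.I) - Complex.sin θ * Complex.exp (φ * Complex.I) =
      Complex.sin (φ - θ) := by
  rw [Complex.exp_mul_I, Complex.exp_mul_I, Complex.sin_sub]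
  ring

theorem cramer_exp_mul_I {θ φ a : ℂ} (b : ℂ) (ha : a ≠ 0) (hsin : Complex.sin (φ - θ) ≠ 0) :
    -b * Complex.sin φ / Complex.sin (φ - θ) * Complex.exp (θ * Complex.I)
      - a * (-b * Complex.sin θ / (a * Complex.sin (φ - θ)) * Complex.exp (φ * Complex.I))
      + b = 0 := by
  field_simp
  linear_combination -b * sin_mul_exp_sub_sin_mul_exp θ φ

/-- Converse direction of Example 1: parameter points satisfying the boundary equation with
both determined quantities positive admit a critical root on the positive imaginary axis. -/
theorem example1_boundary_sufficiency (α β a b : ℝ) (hα : α ≠ 0) (ha : a ≠ 0)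
    (hsin : Real.sin ((β - α) * π / 2) ≠ 0)
    (hu : 0 < -b * Real.sin (β * π / 2) / Real.sin ((β - α) * π / 2))
    (hv : 0 < -b * Real.sin (α * π / 2) / (a * Real.sin ((β - α) * π / 2)))
    (heq : (-b * Real.sin (β * π / 2) / Real.sin ((β - α) * π / 2)) ^ β
      = (-b * Real.sin (α * π / 2) / (a * Real.sin ((β - α) * π / 2))) ^ α) :
    ∃ r : ℝ, 0 < r ∧
      ((r : ℂ) * Complex.I) ^ (α : ℂ) - (a : ℂ) * ((r : ℂ) * Complex.I) ^ (β : ℂ)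
        + (b : ℂ) = 0 := by
  obtain ⟨r, hr, hrα, hrβ⟩ := exists_pos_rpow_eq_and_rpow_eq hα hu hv.le heq
  have hangle : ((β : ℂ) - α) * π / 2 = β * π / 2 - α * π / 2 := by ring
  have hsin' : Complex.sin (β * π / 2 - α * π / 2) ≠ 0 := by
    rw [← hangle]
    exact_mod_cast hsin
  refine ⟨r, hr, ?_⟩
  rw [ofReal_mul_I_cpow_ofReal hr.le, ofReal_mul_I_cpow_ofReal hr.le, hrα, hrβ]
  push_cast
  rw [hangle]
  exact cramer_exp_mul_I b (Complex.ofReal_ne_zero.mpr ha) hsin'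
end

section
/- Let α, β, r be real numbers with r > 0, sin(β·π/2) ≠ 0, and sin((α + β)·π/2) ≠ 0. If ((r : ℂ) * Complex.I)^((α + β : ℝ) : ℂ) + (1000/3) * ((r : ℂ) * Complex.I)^(α : ℂ) + 10000000/3 = 0, then r^α = −10000 * Real.sin ((α + β) * π / 2) / Real.sin (β * π / 2), r^β = −(1000/3) * Real.sin (α * π / 2) / Real.sin ((α + β) * π / 2), and consequently (−(1000/3) * Real.sin (α * π / 2) / Real.sin ((α + β) * π / 2))^α = (−10000 * Real.sin ((α + β) * π / 2) / Real.sin (β * π / 2))^β (real powers). -/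
open Real

/-!
Write `s = ρ * exp (i * θ)` for a root of `s ^ (α + β) + b * s ^ α + c`. Taking the imaginary part
of the equation after multiplying it by `exp (-i * (α + β) * θ)` eliminates `ρ ^ (α + β)` and gives
`ρ ^ α`; its own imaginary part, divided by `ρ ^ α`, gives `ρ ^ β`. The radius `ρ` then disappears
from `(ρ ^ β) ^ α = (ρ ^ α) ^ β`. The imaginary axis is the case `θ = π / 2`.
-/

/-- The characteristic function `z ^ (α + β) + b * z ^ α + c` of a fractional-order system with two
reactive elements of orders `α` and `β`. The coefficients and orders are real, and the powers are
principal branches. -/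
noncomputable def fractionalTrinomial (α β b c : ℝ) (z : ℂ) : ℂ :=
  z ^ ((α + β : ℝ) : ℂ) + b * z ^ (α : ℂ) + c

section

variable {α β b c : ℝ} {z : ℂ}

theorem fractionalTrinomial_re :
    (fractionalTrinomial α β b c z).re =
      ‖z‖ ^ (α + β) * cos ((α + β) * z.arg) + b * (‖z‖ ^ α * cos (α * z.arg)) + c := by
  simp only [fractionalTrinomial, Complex.add_re, Complex.re_ofReal_mul, Complex.cpow_ofReal_re,
    Complex.ofReal_re, mul_comm z.arg]

theorem fractionalTrinomial_im :
    (fractionalTrinomial α β b c z).im =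
      ‖z‖ ^ (α + β) * sin ((α + β) * z.arg) + b * (‖z‖ ^ α * sin (α * z.arg)) := by
  simp only [fractionalTrinomial, Complex.add_im, Complex.im_ofReal_mul, Complex.cpow_ofReal_im,
    Complex.ofReal_im, mul_comm z.arg, add_zero]

theorem mul_norm_rpow_mul_sin_of_fractionalTrinomial_eq_zero
    (h : fractionalTrinomial α β b c z = 0) :
    b * ‖z‖ ^ α * sin (β * z.arg) = -c * sin ((α + β) * z.arg) := by
  have hre := fractionalTrinomial_re.symm.trans (congrArg Complex.re h)
  have him := fractionalTrinomial_im.symm.trans (congrArg Complex.im h)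
  rw [Complex.zero_re] at hre
  rw [Complex.zero_im] at him
  have hsin : sin (β * z.arg) =
      sin ((α + β) * z.arg) * cos (α * z.arg) - cos ((α + β) * z.arg) * sin (α * z.arg) := by
    rw [← sin_sub, ← sub_mul, add_sub_cancel_left]
  rw [hsin]
  linear_combination sin ((α + β) * z.arg) * hre - cos ((α + β) * z.arg) * him

theorem norm_rpow_mul_sin_of_fractionalTrinomial_eq_zero
    (h : fractionalTrinomial α β b c z = 0) :
    ‖z‖ ^ β * sin ((α + β) * z.arg) = -b * sin (α * z.arg) := by
  obtain rfl | hz := eq_or_ne z 0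
  · simp
  have hnorm : 0 < ‖z‖ := norm_pos_iff.mpr hz
  have him := fractionalTrinomial_im.symm.trans (congrArg Complex.im h)
  rw [Complex.zero_im, rpow_add hnorm] at him
  apply mul_left_cancel₀ (rpow_pos_of_pos hnorm α).ne'
  linear_combination him

theorem boost_converter_boundary_general
    (hβ : sin (β * z.arg) ≠ 0) (hαβ : sin ((α + β) * z.arg) ≠ 0)
    (hroot : fractionalTrinomial α β b c z = 0) :
    ‖z‖ ^ α = -(c / b) * sin ((α + β) * z.arg) / sin (β * z.arg) ∧
    ‖z‖ ^ β = -b * sin (α * z.arg) / sin ((α + β) * z.arg) ∧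
    (-b * sin (α * z.arg) / sin ((α + β) * z.arg)) ^ α =
      (-(c / b) * sin ((α + β) * z.arg) / sin (β * z.arg)) ^ β := by
  have hβ_mul := norm_rpow_mul_sin_of_fractionalTrinomial_eq_zero hroot
  have hz : z ≠ 0 := by
    rintro rfl
    simp at hβ
  have hb : b ≠ 0 := by
    rintro rfl
    have hpos : 0 < ‖z‖ ^ β := rpow_pos_of_pos (norm_pos_iff.mpr hz) β
    exact mul_ne_zero hpos.ne' hαβ (by simpa using hβ_mul)
  have hα_pow : ‖z‖ ^ α = -(c / b) * sin ((α + β) * z.arg) / sin (β * z.arg) := by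
    have h := mul_norm_rpow_mul_sin_of_fractionalTrinomial_eq_zero hroot
    field_simp
    linear_combination h
  have hβ_pow : ‖z‖ ^ β = -b * sin (α * z.arg) / sin ((α + β) * z.arg) :=
    eq_div_of_mul_eq hαβ hβ_mul
  refine ⟨hα_pow, hβ_pow, ?_⟩
  rw [← hα_pow, ← hβ_pow, ← rpow_mul (norm_nonneg z), ← rpow_mul (norm_nonneg z), mul_comm]

end

/-- Eq. (31) of the paper (signs corrected): the boundary equation of the stable parameter
region of the fractional-order boost converter system. -/
theorem boost_converter_boundary (α β r : ℝ) (hr : 0 < r)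
    (hβ : Real.sin (β * π / 2) ≠ 0) (hαβ : Real.sin ((α + β) * π / 2) ≠ 0)
    (hroot : ((r : ℂ) * Complex.I) ^ (((α + β : ℝ)) : ℂ)
      + (1000/3) * ((r : ℂ) * Complex.I) ^ (α : ℂ) + 10000000/3 = 0) :
    r ^ α = -10000 * Real.sin ((α + β) * π / 2) / Real.sin (β * π / 2) ∧
    r ^ β = -(1000/3) * Real.sin (α * π / 2) / Real.sin ((α + β) * π / 2) ∧
    (-(1000/3) * Real.sin (α * π / 2) / Real.sin ((α + β) * π / 2)) ^ α
      = (-10000 * Real.sin ((α + β) * π / 2) / Real.sin (β * π / 2)) ^ β := by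
  have hnorm : ‖(r : ℂ) * Complex.I‖ = r := by
    rw [norm_mul, Complex.norm_I, mul_one, Complex.norm_of_nonneg hr.le]
  have harg (x : ℝ) : x * ((r : ℂ) * Complex.I).arg = x * π / 2 := by
    rw [Complex.arg_real_mul _ hr, Complex.arg_I, mul_div_assoc]
  have htrinomial :
      fractionalTrinomial α β (1000 / 3) (10000000 / 3) ((r : ℂ) * Complex.I) = 0 := by
    simpa [fractionalTrinomial] using hroot
  have hratio : (10000000 / 3 : ℝ) / (1000 / 3) = 10000 := by norm_num
  simpa only [hnorm, harg, hratio] using boost_converter_boundary_general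
    ((harg β).symm ▸ hβ) ((harg (α + β)).symm ▸ hαβ) htrinomial
end

section
/- Let α, β, r be real numbers with r > 0, sin(β·π/2) ≠ 0, and sin((α + β)·π/2) ≠ 0. If ((r : ℂ) * Complex.I)^((α + β : ℝ) : ℂ) + 12 * ((r : ℂ) * Complex.I)^(α : ℂ) + 34 = 0, then (−12 * Real.sin (α * π / 2) / Real.sin ((α + β) * π / 2))^α = (−(17/6) * Real.sin ((α + β) * π / 2) / Real.sin (β * π / 2))^β (real powers), and both bases appearing in this equation are positive (being equal to r^β and r^α respectively). -/
/-! Three complex numbers with zero sum are the sides of a triangle, so their lengths are tied to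
the differences of their arguments by the law of sines. For `z ^ (α + β)`, `a * z ^ α` and `b`, this
determines both `‖z‖ ^ β` and `‖z‖ ^ α` in terms of `arg z`, and `‖z‖` is eliminated through
`(‖z‖ ^ β) ^ α = (‖z‖ ^ α) ^ β`. -/

open Real

theorem law_of_sines_of_cpow_trinomial_eq_zero {z : ℂ} {a b c p q s : ℝ}
    (h : (a : ℂ) * z ^ (p : ℂ) + b * z ^ (q : ℂ) + c * z ^ (s : ℂ) = 0) :
    a * ‖z‖ ^ p * sin ((p - s) * z.arg) + b * ‖z‖ ^ q * sin ((q - s) * z.arg) = 0 := by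
  have hre := congrArg Complex.re h
  have him := congrArg Complex.im h
  simp only [Complex.add_re, Complex.add_im, Complex.re_ofReal_mul, Complex.im_ofReal_mul,
    Complex.cpow_ofReal_re, Complex.cpow_ofReal_im, Complex.zero_re, Complex.zero_im,
    mul_comm z.arg] at hre him
  rw [sub_mul, sub_mul, sin_sub, sin_sub]
  linear_combination cos (s * z.arg) * him - sin (s * z.arg) * hre

section

variable {z : ℂ} {a b α β : ℝ}

theorem norm_rpow_mul_sin_add_eq
    (h : z ^ ((α + β : ℝ) : ℂ) + a * z ^ (α : ℂ) + b = 0) :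
    ‖z‖ ^ β * sin ((α + β) * z.arg) = -a * sin (α * z.arg) := by
  rcases eq_or_ne z 0 with rfl | hz
  · simp
  have hnorm : 0 < ‖z‖ := norm_pos_iff.mpr hz
  have hsines := law_of_sines_of_cpow_trinomial_eq_zero
    (z := z) (a := 1) (b := a) (c := b) (p := α + β) (q := α) (s := 0) (by simpa using h)
  rw [rpow_add hnorm, sub_zero, sub_zero] at hsines
  refine mul_left_cancel₀ (rpow_pos_of_pos hnorm α).ne' ?_
  linear_combination hsines

theorem mul_norm_rpow_mul_sin_eq
    (h : z ^ ((α + β : ℝ) : ℂ) + a * z ^ (α : ℂ) + b = 0) :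
    a * ‖z‖ ^ α * sin (β * z.arg) = -b * sin ((α + β) * z.arg) := by
  have hsines := law_of_sines_of_cpow_trinomial_eq_zero
    (z := z) (a := a) (b := b) (c := 1) (p := α) (q := 0) (s := α + β)
    (by simpa [add_assoc, add_comm, add_left_comm] using h)
  rw [sub_add_cancel_left, zero_sub, neg_mul, neg_mul, sin_neg, sin_neg, rpow_zero] at hsines
  linear_combination -hsines

theorem example3_boundary_general (ha : a ≠ 0) (hβ : sin (β * z.arg) ≠ 0)
    (h : z ^ ((α + β : ℝ) : ℂ) + a * z ^ (α : ℂ) + b = 0) :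
    (-a * sin (α * z.arg) / sin ((α + β) * z.arg)) ^ α
      = (-(b / a) * sin ((α + β) * z.arg) / sin (β * z.arg)) ^ β ∧
    -a * sin (α * z.arg) / sin ((α + β) * z.arg) = ‖z‖ ^ β ∧
    -(b / a) * sin ((α + β) * z.arg) / sin (β * z.arg) = ‖z‖ ^ α ∧
    0 < -a * sin (α * z.arg) / sin ((α + β) * z.arg) ∧
    0 < -(b / a) * sin ((α + β) * z.arg) / sin (β * z.arg) := by
  have hnorm : 0 < ‖z‖ := norm_pos_iff.mpr (by rintro rfl; simp at hβ)
  have hα_pos : 0 < ‖z‖ ^ α := rpow_pos_of_pos hnorm α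
  have hβ_pos : 0 < ‖z‖ ^ β := rpow_pos_of_pos hnorm β
  have hsines := mul_norm_rpow_mul_sin_eq h
  have hαβ : sin ((α + β) * z.arg) ≠ 0 := by
    intro hzero
    rw [hzero, mul_zero] at hsines
    exact mul_ne_zero (mul_ne_zero ha hα_pos.ne') hβ hsines
  have hβ_eq : -a * sin (α * z.arg) / sin ((α + β) * z.arg) = ‖z‖ ^ β :=
    (div_eq_iff hαβ).mpr (norm_rpow_mul_sin_add_eq h).symm
  have hα_eq : -(b / a) * sin ((α + β) * z.arg) / sin (β * z.arg) = ‖z‖ ^ α := by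
    field_simp
    linear_combination -hsines
  rw [hβ_eq, hα_eq]
  have hcomm : (‖z‖ ^ β) ^ α = (‖z‖ ^ α) ^ β := by
    rw [← rpow_mul hnorm.le, ← rpow_mul hnorm.le, mul_comm]
  exact ⟨hcomm, rfl, rfl, hβ_pos, hα_pos⟩

end

/-- Eq. (37) in Example 3 of the paper: the boundary equation of the stable parameter
region of the system with characteristic equation s^{α+β} + 12 s^α + 34 = 0, with both
bases positive (equal to r^β and r^α respectively). -/
theorem example3_boundary (α β r : ℝ) (hr : 0 < r)
    (hβ : Real.sin (β * π / 2) ≠ 0) (hαβ : Real.sin ((α + β) * π / 2) ≠ 0)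
    (hroot : ((r : ℂ) * Complex.I) ^ (((α + β : ℝ)) : ℂ)
      + 12 * ((r : ℂ) * Complex.I) ^ (α : ℂ) + 34 = 0) :
    (-12 * Real.sin (α * π / 2) / Real.sin ((α + β) * π / 2)) ^ α
      = (-(17/6) * Real.sin ((α + β) * π / 2) / Real.sin (β * π / 2)) ^ β ∧
    -12 * Real.sin (α * π / 2) / Real.sin ((α + β) * π / 2) = r ^ β ∧
    -(17/6) * Real.sin ((α + β) * π / 2) / Real.sin (β * π / 2) = r ^ α ∧
    0 < -12 * Real.sin (α * π / 2) / Real.sin ((α + β) * π / 2) ∧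
    0 < -(17/6) * Real.sin ((α + β) * π / 2) / Real.sin (β * π / 2) := by
  have harg : ((r : ℂ) * Complex.I).arg = π / 2 := by
    rw [Complex.arg_real_mul _ hr, Complex.arg_I]
  have hnorm : ‖(r : ℂ) * Complex.I‖ = r := by
    simp [abs_of_pos hr]
  have hcoeff : (34 / 12 : ℝ) = 17 / 6 := by norm_num
  simpa only [harg, hnorm, hcoeff, ← mul_div_assoc] using
    example3_boundary_general (z := r * Complex.I) (a := 12) (b := 34)
      (by norm_num) (by rwa [harg, ← mul_div_assoc]) (mod_cast hroot)
end
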